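/- Let s be a nonnegative integer, p ∈ (1,∞) and α > 0 be such that α + 1/p < s + 1. Let μ be a positive Borel measure on 𝔻 with ∫_𝔻 (1−|ζ|)^{s+1} dμ(ζ) < ∞ and let u be the canonical integral u(z) = ∫_𝔻 log|E(A(z,ζ),s)| dμ(ζ). If n(r,u) := μ(closed disc of radius r centered at 0) = O((1−r)^{−α−1/p}) as r ↑ 1, then m_p(r,u) = O((1−r)^{−α}) as r ↑ 1. -/

import Mathlib

open MeasureTheory Complex

/-- The `p`-th integral mean `m_p(r,u) = ((1/2π) ∫₀^{2π} |u(re^{iθ})|^p dθ)^{1/p}`. -/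
noncomputable def mpMean (p r : ℝ) (u : ℂ → ℝ) : ℝ :=
  ((1 / (2 * Real.pi)) *
      ∫ θ in (0 : ℝ)..(2 * Real.pi),
        |u ((r : ℂ) * Complex.exp (θ * Complex.I))| ^ p) ^ (1 / p)

/-- The Weierstrass primary factor `E(w,s) = (1-w)·exp(w + w²/2 + ⋯ + w^s/s)`. -/
noncomputable def weierE (w : ℂ) (s : ℕ) : ℂ :=
  (1 - w) * Complex.exp (∑ j ∈ Finset.range s, w ^ (j + 1) / (j + 1))

/-- `A(z,ζ) = (1-|ζ|²)/(1 - z·conj ζ)`. -/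
noncomputable def Acayley (z ζ : ℂ) : ℂ :=
  ((1 : ℂ) - (‖ζ‖ : ℂ) ^ 2) / (1 - z * (starRingEnd ℂ) ζ)

/-!
Where `|ζ| < 1/2`, the kernel differs from `log |ζ|` by a bounded amount, so this part of the
canonical integral is `O(1)` as `|z| → 1`. For the rest, Minkowski's integral inequality bounds the
mean by the `μ`-integral of the `L^p(dθ)` norms of the kernel. Since a logarithm is milder than any
power, `|log |E(A, s)||` is dominated by `|A| ^ (s + 1)` times a small negative power of the
pseudo-hyperbolic distance, and `(s + 1) p > 1` gives norms
`O((1 - |ζ|) ^ (s + 1) (1 - r |ζ|) ^ (1 / p - (s + 1)))`. The hypothesis on `n(r, u)` is the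
weak-type bound `μ {ζ | t < 1 - |ζ|} = O(t ^ (-β))` with `β = α + 1 / p`. As `1 / p < β < s + 1`,
the layer-cake formula yields the final integral `O((1 - r) ^ (1 / p - β)) = O((1 - r) ^ (-α))`.
-/

open Set Metric

open scoped ENNReal NNReal ComplexConjugate Real

section IntegralInequalities

variable {X Y : Type*} [MeasurableSpace X] [MeasurableSpace Y] {μ : Measure X} {ν : Measure Y}

lemma sFinite_of_lintegral_ne_top {f : X → ℝ≥0∞} (hf : Measurable f) (hf0 : ∀ᵐ x ∂μ, f x ≠ 0)
    (hfin : ∫⁻ x, f x ∂μ ≠ ∞) : SFinite μ := by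
  have : IsFiniteMeasure (μ.withDensity f) := isFiniteMeasure_withDensity hfin
  rw [← withDensity_inv_same hf hf0 ((ae_lt_top hf hfin).mono fun _ h => h.ne)]
  infer_instance

lemma rpow_lintegral_le_lintegral_rpow_mul {p : ℝ} (hp : 1 ≤ p) {f g : X → ℝ≥0∞}
    (hf : AEMeasurable f μ) (hg : AEMeasurable g μ) (hg0 : ∀ᵐ x ∂μ, g x ≠ 0)
    (hgtop : ∀ᵐ x ∂μ, g x ≠ ∞) :
    (∫⁻ x, f x ∂μ) ^ p ≤ (∫⁻ x, f x ^ p * g x ^ (1 - p) ∂μ) * (∫⁻ x, g x ∂μ) ^ (p - 1) := by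
  have hp0 : 0 < p := by linarith
  have hinv : 1 / p ≤ 1 := (div_le_one hp0).2 hp
  have hsplit : ∫⁻ x, f x ∂μ =
      ∫⁻ x, (f x ^ p * g x ^ (1 - p)) ^ (1 / p) * g x ^ (1 - 1 / p) ∂μ := by
    refine lintegral_congr_ae ?_
    filter_upwards [hg0, hgtop] with x h0 htop
    have hexp : (1 - p) * (1 / p) + (1 - 1 / p) = 0 := by field_simp; ring
    rw [ENNReal.mul_rpow_of_nonneg _ _ (by positivity), ← ENNReal.rpow_mul, ← ENNReal.rpow_mul,
      mul_one_div_cancel hp0.ne', ENNReal.rpow_one, mul_assoc, ← ENNReal.rpow_add _ _ h0 htop,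
      hexp, ENNReal.rpow_zero, mul_one]
  calc (∫⁻ x, f x ∂μ) ^ p
      ≤ ((∫⁻ x, f x ^ p * g x ^ (1 - p) ∂μ) ^ (1 / p) * (∫⁻ x, g x ∂μ) ^ (1 - 1 / p)) ^ p := by
        rw [hsplit]
        gcongr
        exact ENNReal.lintegral_mul_norm_pow_le (by fun_prop) hg (by positivity) (by linarith)
          (by ring)
    _ = _ := by
        have hexp : (1 - 1 / p) * p = p - 1 := by field_simp
        rw [ENNReal.mul_rpow_of_nonneg _ _ hp0.le, ← ENNReal.rpow_mul, ← ENNReal.rpow_mul,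
          one_div_mul_cancel hp0.ne', ENNReal.rpow_one, hexp]

lemma lintegral_rpow_lintegral_le_of_ne_zero [SFinite μ] [SFinite ν] {p : ℝ} (hp : 1 ≤ p)
    {f : X → Y → ℝ≥0∞} (hf : Measurable (Function.uncurry f)) {G : Y → ℝ≥0∞} (hG : Measurable G)
    (hG0 : ∀ᵐ y ∂ν, G y ≠ 0) (hGtop : ∀ᵐ y ∂ν, G y ≠ ∞)
    (hfG : ∀ᵐ y ∂ν, ∫⁻ x, f x y ^ p ∂μ ≤ G y ^ p) :
    ∫⁻ x, (∫⁻ y, f x y ∂ν) ^ p ∂μ ≤ (∫⁻ y, G y ∂ν) ^ p := by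
  have hm : Measurable (Function.uncurry fun x y => f x y ^ p * G y ^ (1 - p)) :=
    (hf.pow_const p).mul ((hG.comp measurable_snd).pow_const _)
  calc ∫⁻ x, (∫⁻ y, f x y ∂ν) ^ p ∂μ
      ≤ ∫⁻ x, (∫⁻ y, f x y ^ p * G y ^ (1 - p) ∂ν) * (∫⁻ y, G y ∂ν) ^ (p - 1) ∂μ :=
        lintegral_mono fun x => rpow_lintegral_le_lintegral_rpow_mul hp
          (hf.comp measurable_prodMk_left).aemeasurable hG.aemeasurable hG0 hGtop
    _ = (∫⁻ y, (∫⁻ x, f x y ^ p ∂μ) * G y ^ (1 - p) ∂ν) * (∫⁻ y, G y ∂ν) ^ (p - 1) := by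
        rw [lintegral_mul_const _ hm.lintegral_prod_right, lintegral_lintegral_swap hm.aemeasurable]
        congr 1
        exact lintegral_congr fun y =>
          lintegral_mul_const _ ((hf.comp measurable_prodMk_right).pow_const p)
    _ ≤ (∫⁻ y, G y ∂ν) * (∫⁻ y, G y ∂ν) ^ (p - 1) := by
        gcongr ?_ * _
        refine lintegral_mono_ae ?_
        filter_upwards [hG0, hGtop, hfG] with y h0 htop hy
        calc (∫⁻ x, f x y ^ p ∂μ) * G y ^ (1 - p) ≤ G y ^ p * G y ^ (1 - p) := by gcongr
          _ = G y := by
            rw [← ENNReal.rpow_add _ _ h0 htop, add_sub_cancel, ENNReal.rpow_one]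
    _ = (∫⁻ y, G y ∂ν) ^ p := by
        conv_lhs => enter [1]; rw [← ENNReal.rpow_one (∫⁻ y, G y ∂ν)]
        rw [← ENNReal.rpow_add_of_nonneg _ _ zero_le_one (by linarith), add_sub_cancel]

theorem lintegral_rpow_lintegral_le [SFinite μ] [SFinite ν] {p : ℝ} (hp : 1 ≤ p)
    {f : X → Y → ℝ≥0∞} (hf : Measurable (Function.uncurry f)) :
    (∫⁻ x, (∫⁻ y, f x y ∂ν) ^ p ∂μ) ^ (1 / p) ≤ ∫⁻ y, (∫⁻ x, f x y ^ p ∂μ) ^ (1 / p) ∂ν := by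
  have hp0 : 0 < p := by linarith
  set N : Y → ℝ≥0∞ := fun y => (∫⁻ x, f x y ^ p ∂μ) ^ (1 / p) with hN
  have hNm : Measurable N := (hf.pow_const p).lintegral_prod_left'.pow_const _
  have hNp (y : Y) : ∫⁻ x, f x y ^ p ∂μ = N y ^ p := by
    rw [hN, ← ENNReal.rpow_mul, one_div_mul_cancel hp0.ne', ENNReal.rpow_one]
  rcases eq_or_ne (∫⁻ y, N y ∂ν) ∞ with htop | htop
  · exact htop ▸ le_top
  rw [one_div, ENNReal.rpow_inv_le_iff hp0]
  -- The weight `N ^ (1 - p)` requires `N ≠ 0`, and `f` is null where `N` vanishes.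
  set S : Set Y := {y | N y ≠ 0}
  have hS : MeasurableSet S := hNm (measurableSet_singleton 0).compl
  have hzero : ∫⁻ x, ∫⁻ y in Sᶜ, f x y ∂ν ∂μ = 0 := by
    rw [lintegral_lintegral_swap hf.aemeasurable]
    refine setLIntegral_eq_zero hS.compl fun y hy => ?_
    have hfy : Measurable fun x => f x y := hf.comp measurable_prodMk_right
    have hpow : ∫⁻ x, f x y ^ p ∂μ = 0 := by
      rw [hNp, not_not.1 hy, ENNReal.zero_rpow_of_pos hp0]
    exact (lintegral_eq_zero_iff hfy).2
      (ENNReal.ae_eq_zero_of_lintegral_rpow_eq_zero hp0.le hfy.aemeasurable hpow)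
  have hrestrict : ∀ᵐ x ∂μ, ∫⁻ y, f x y ∂ν = ∫⁻ y in S, f x y ∂ν := by
    filter_upwards [(lintegral_eq_zero_iff hf.lintegral_prod_right).1 hzero] with x hx
    rw [← lintegral_add_compl _ hS, hx, Pi.zero_apply, add_zero]
  calc ∫⁻ x, (∫⁻ y, f x y ∂ν) ^ p ∂μ
      = ∫⁻ x, (∫⁻ y in S, f x y ∂ν) ^ p ∂μ :=
        lintegral_congr_ae (hrestrict.mono fun x hx => congrArg (· ^ p) hx)
    _ ≤ (∫⁻ y in S, N y ∂ν) ^ p :=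
        lintegral_rpow_lintegral_le_of_ne_zero hp hf hNm (ae_restrict_mem hS)
          (ae_restrict_of_ae ((ae_lt_top hNm htop).mono fun _ h => h.ne))
          (ae_of_all _ fun y => (hNp y).le)
    _ ≤ (∫⁻ y, N y ∂ν) ^ p := by gcongr; exact Measure.restrict_le_self

lemma setLIntegral_enorm_le_of_norm_sub_le {E : Type*} [NormedAddCommGroup E] {f g : X → E}
    {C : ℝ} {T : Set X} (hT : MeasurableSet T) (hfg : ∀ x ∈ T, ‖f x - g x‖ ≤ C) :
    ∫⁻ x in T, ‖f x‖ₑ ∂μ ≤ ENNReal.ofReal C * μ T + ∫⁻ x in T, ‖g x‖ₑ ∂μ := by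
  rw [← setLIntegral_const, ← lintegral_add_left measurable_const]
  refine setLIntegral_mono' hT fun x hx => ?_
  calc ‖f x‖ₑ ≤ ‖f x - g x‖ₑ + ‖g x‖ₑ := by
        simpa only [sub_add_cancel] using enorm_add_le (f x - g x) (g x)
    _ ≤ ENNReal.ofReal C + ‖g x‖ₑ := by
        rw [← ofReal_norm]
        gcongr
        exact hfg x hx

lemma exists_enorm_setIntegral_le {E : Type*} [NormedAddCommGroup E] [NormedSpace ℝ E]
    {g : X → E} (C : ℝ) {S T : Set X} (hT : MeasurableSet T) (hTS : T ⊆ S) (hμT : μ T ≠ ∞)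
    (hg : AEStronglyMeasurable g μ) :
    ∃ L : ℝ≥0, ∀ f : X → E, AEStronglyMeasurable f μ → (∀ x ∈ T, ‖f x - g x‖ ≤ C) →
      ‖∫ x in S, f x ∂μ‖ₑ ≤ L + ∫⁻ x in S \ T, ‖f x‖ₑ ∂μ := by
  by_cases hgint : IntegrableOn g T μ
  · have hL : ENNReal.ofReal C * μ T + ∫⁻ x in T, ‖g x‖ₑ ∂μ ≠ ∞ :=
      ENNReal.add_ne_top.2 ⟨ENNReal.mul_ne_top ENNReal.ofReal_ne_top hμT, hgint.2.ne⟩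
    refine ⟨(ENNReal.ofReal C * μ T + ∫⁻ x in T, ‖g x‖ₑ ∂μ).toNNReal, fun f _ hfg => ?_⟩
    calc ‖∫ x in S, f x ∂μ‖ₑ ≤ ∫⁻ x in S, ‖f x‖ₑ ∂μ := enorm_integral_le_lintegral_enorm _
      _ = ∫⁻ x in T, ‖f x‖ₑ ∂μ + ∫⁻ x in S \ T, ‖f x‖ₑ ∂μ := by
          rw [← lintegral_inter_add_sdiff _ S hT, inter_eq_right.2 hTS]
      _ ≤ _ := by
          rw [ENNReal.coe_toNNReal hL]
          gcongr
          exact setLIntegral_enorm_le_of_norm_sub_le hT hfg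
  · -- Here no such `f` is integrable on `S`, and the Bochner integral is `0` by convention.
    refine ⟨0, fun f hf hfg => ?_⟩
    have hsub : IntegrableOn (f - g) T μ :=
      Measure.integrableOn_of_bounded hμT (hf.sub hg)
        ((ae_restrict_iff' hT).2 (ae_of_all _ hfg))
    have hfint : ¬ IntegrableOn f S μ := fun hint => hgint <| by
      simpa only [sub_sub_cancel] using (hint.mono_set hTS).sub hsub
    rw [integral_undef hfint, enorm_zero]
    exact zero_le

end IntegralInequalities

lemma lintegral_Ioc_rpow {a δ : ℝ} (ha : -1 < a) (hδ : 0 ≤ δ) :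
    ∫⁻ t in Ioc 0 δ, ENNReal.ofReal (t ^ a) = ENNReal.ofReal (δ ^ (a + 1) / (a + 1)) := by
  have hint : IntegrableOn (fun t : ℝ => t ^ a) (Ioc 0 δ) :=
    (intervalIntegrable_iff_integrableOn_Ioc_of_le hδ).1
      (intervalIntegral.intervalIntegrable_rpow' ha)
  have hnn : ∀ᵐ t ∂volume.restrict (Ioc 0 δ), 0 ≤ t ^ a := by
    filter_upwards [ae_restrict_mem measurableSet_Ioc] with t ht using Real.rpow_nonneg ht.1.le a
  rw [← ofReal_integral_eq_lintegral_ofReal hint hnn, ← intervalIntegral.integral_of_le hδ,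
    integral_rpow (Or.inl ha), Real.zero_rpow (by linarith), sub_zero]

lemma lintegral_Ioi_rpow {a δ : ℝ} (ha : a < -1) (hδ : 0 < δ) :
    ∫⁻ t in Ioi δ, ENNReal.ofReal (t ^ a) = ENNReal.ofReal (-δ ^ (a + 1) / (a + 1)) := by
  have hnn : ∀ᵐ t ∂volume.restrict (Ioi δ), 0 ≤ t ^ a := by
    filter_upwards [ae_restrict_mem measurableSet_Ioi] with t ht
      using Real.rpow_nonneg (hδ.trans ht).le a
  rw [← ofReal_integral_eq_lintegral_ofReal (integrableOn_Ioi_rpow_of_lt ha hδ) hnn,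
    integral_Ioi_rpow_of_lt ha hδ]

section WeakType

variable {X : Type*} [MeasurableSpace X] {μ : Measure X} {f : X → ℝ} {β δ : ℝ} {K : ℝ≥0∞}

lemma setLIntegral_rpow_preimage_Ioc_le {a : ℝ} (hf : Measurable f) (ha : 0 < a) (hβa : β < a)
    (hδ : 0 < δ) (hK : ∀ t > 0, μ {x | t < f x} ≤ K * ENNReal.ofReal (t ^ (-β))) :
    ∫⁻ x in f ⁻¹' Ioc 0 δ, ENNReal.ofReal (f x ^ a) ∂μ ≤
      K * ENNReal.ofReal (a / (a - β) * δ ^ (a - β)) := by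
  have hS : MeasurableSet (f ⁻¹' Ioc 0 δ) := hf measurableSet_Ioc
  have htail : ∀ t ∈ Ioi (0 : ℝ), (μ.restrict (f ⁻¹' Ioc 0 δ)) {x | t < f x} *
      ENNReal.ofReal (t ^ (a - 1)) ≤
        (Ioc 0 δ).indicator (fun t => K * ENNReal.ofReal (t ^ (a - 1 - β))) t := by
    intro t (ht : 0 < t)
    rw [Measure.restrict_apply (measurableSet_lt measurable_const hf)]
    rcases le_or_gt t δ with htδ | htδ
    · rw [indicator_of_mem (show t ∈ Ioc 0 δ from ⟨ht, htδ⟩), sub_eq_neg_add _ β,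
        Real.rpow_add ht, ENNReal.ofReal_mul (by positivity), ← mul_assoc]
      gcongr
      exact (measure_mono inter_subset_left).trans (hK t ht)
    · have hempty : {x | t < f x} ∩ f ⁻¹' Ioc 0 δ = ∅ :=
        eq_empty_of_forall_notMem fun x hx => hx.2.2.not_gt (htδ.trans hx.1)
      rw [hempty, measure_empty, zero_mul]
      exact zero_le
  calc ∫⁻ x in f ⁻¹' Ioc 0 δ, ENNReal.ofReal (f x ^ a) ∂μ
      = ENNReal.ofReal a * ∫⁻ t in Ioi 0, (μ.restrict (f ⁻¹' Ioc 0 δ)) {x | t < f x} *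
          ENNReal.ofReal (t ^ (a - 1)) :=
        lintegral_rpow_eq_lintegral_meas_lt_mul _
          ((ae_restrict_mem hS).mono fun _ hx => hx.1.le) hf.aemeasurable ha
    _ ≤ ENNReal.ofReal a * ∫⁻ t in Ioc 0 δ, K * ENNReal.ofReal (t ^ (a - 1 - β)) := by
        refine mul_le_mul' le_rfl ?_
        rw [← lintegral_indicator measurableSet_Ioc]
        exact (setLIntegral_mono' measurableSet_Ioi htail).trans (setLIntegral_le_lintegral _ _)
    _ = K * ENNReal.ofReal (a / (a - β) * δ ^ (a - β)) := by
        rw [lintegral_const_mul _ (by fun_prop), lintegral_Ioc_rpow (by linarith) hδ.le,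
          mul_left_comm, ← ENNReal.ofReal_mul ha.le]
        ring_nf

lemma setLIntegral_rpow_preimage_Ioi_le {b : ℝ} (hf : Measurable f) (hb : 0 < b) (hbβ : b < β)
    (hδ : 0 < δ) (hK : ∀ t > 0, μ {x | t < f x} ≤ K * ENNReal.ofReal (t ^ (-β))) :
    ∫⁻ x in f ⁻¹' Ioi δ, ENNReal.ofReal (f x ^ b) ∂μ ≤
      K * ENNReal.ofReal (β / (β - b) * δ ^ (b - β)) := by
  have hS : MeasurableSet (f ⁻¹' Ioi δ) := hf measurableSet_Ioi
  have hβb : 0 < β - b := sub_pos.2 hbβ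
  set T : ℝ → ℝ≥0∞ := fun t => (μ.restrict (f ⁻¹' Ioi δ)) {x | t < f x} *
    ENNReal.ofReal (t ^ (b - 1))
  have hlow : ∫⁻ t in Ioc 0 δ, T t ≤
      K * ENNReal.ofReal (δ ^ (-β)) * ENNReal.ofReal (δ ^ b / b) := by
    calc ∫⁻ t in Ioc 0 δ, T t
        ≤ ∫⁻ t in Ioc 0 δ, K * ENNReal.ofReal (δ ^ (-β)) * ENNReal.ofReal (t ^ (b - 1)) := by
          refine lintegral_mono fun t => mul_le_mul' ?_ le_rfl
          exact ((measure_mono (subset_univ _)).trans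
            (Measure.restrict_apply_univ (μ := μ) _).le).trans (hK δ hδ)
      _ = _ := by
          rw [lintegral_const_mul _ (by fun_prop), lintegral_Ioc_rpow (by linarith) hδ.le,
            sub_add_cancel]
  have hhigh : ∫⁻ t in Ioi δ, T t ≤ K * ENNReal.ofReal (δ ^ (b - β) / (β - b)) := by
    calc ∫⁻ t in Ioi δ, T t
        ≤ ∫⁻ t in Ioi δ, K * ENNReal.ofReal (t ^ (b - 1 - β)) := by
          refine setLIntegral_mono' measurableSet_Ioi fun t (ht : δ < t) => ?_
          rw [sub_eq_neg_add _ β, Real.rpow_add (hδ.trans ht), ENNReal.ofReal_mul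
            (Real.rpow_nonneg (hδ.trans ht).le _), ← mul_assoc]
          exact mul_le_mul' ((Measure.restrict_apply_le _ _).trans (hK t (hδ.trans ht))) le_rfl
      _ = _ := by
          rw [lintegral_const_mul _ (by fun_prop), lintegral_Ioi_rpow (by linarith) hδ,
            show b - 1 - β + 1 = -(β - b) by ring, neg_div_neg_eq, neg_sub]
  calc ∫⁻ x in f ⁻¹' Ioi δ, ENNReal.ofReal (f x ^ b) ∂μ
      = ENNReal.ofReal b * ((∫⁻ t in Ioc 0 δ, T t) + ∫⁻ t in Ioi δ, T t) := by
        rw [lintegral_rpow_eq_lintegral_meas_lt_mul _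
          ((ae_restrict_mem hS).mono fun _ hx => (hδ.trans hx).le) hf.aemeasurable hb,
          ← Ioc_union_Ioi_eq_Ioi hδ.le, lintegral_union measurableSet_Ioi
            (Ioc_disjoint_Ioi le_rfl)]
    _ ≤ ENNReal.ofReal b * (K * ENNReal.ofReal (δ ^ (-β)) * ENNReal.ofReal (δ ^ b / b) +
          K * ENNReal.ofReal (δ ^ (b - β) / (β - b))) := by gcongr
    _ = K * ENNReal.ofReal (β / (β - b) * δ ^ (b - β)) := by
        rw [mul_assoc K, ← mul_add, mul_left_comm, ← ENNReal.ofReal_mul (by positivity),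
          ← ENNReal.ofReal_add (by positivity) (by positivity), ← ENNReal.ofReal_mul hb.le,
          sub_eq_add_neg b β, Real.rpow_add hδ]
        congr 2
        field_simp
        ring

end WeakType

section MassIntegral

variable {μ : Measure ℂ} {K : ℝ≥0∞} {a b β r : ℝ}

lemma setLIntegral_one_sub_norm_rpow_preimage_Ioc_le (ha : 0 < a) (hba : b ≤ a) (hβa : β < a)
    (hr0 : 0 ≤ r) (hr1 : r < 1)
    (hK : ∀ t > 0, μ {ζ : ℂ | t < 1 - ‖ζ‖} ≤ K * ENNReal.ofReal (t ^ (-β))) :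
    ∫⁻ ζ in (fun ζ : ℂ => 1 - ‖ζ‖) ⁻¹' Ioc 0 (1 - r),
        ENNReal.ofReal ((1 - ‖ζ‖) ^ a * (1 - r * ‖ζ‖) ^ (b - a)) ∂μ ≤
      K * ENNReal.ofReal (a / (a - β) * (1 - r) ^ (b - β)) := by
  have hδ : 0 < 1 - r := sub_pos.2 hr1
  have haβ : 0 < a - β := sub_pos.2 hβa
  have hf : Measurable fun ζ : ℂ => 1 - ‖ζ‖ := by fun_prop
  calc _ ≤ ∫⁻ ζ in (fun ζ : ℂ => 1 - ‖ζ‖) ⁻¹' Ioc 0 (1 - r),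
        ENNReal.ofReal ((1 - ‖ζ‖) ^ a) * ENNReal.ofReal ((1 - r) ^ (b - a)) ∂μ := by
        refine setLIntegral_mono' (hf measurableSet_Ioc) fun ζ hζ => ?_
        have h0 : 0 < 1 - ‖ζ‖ := hζ.1
        have hδζ : 1 - r ≤ 1 - r * ‖ζ‖ := by nlinarith
        rw [← ENNReal.ofReal_mul (by positivity)]
        gcongr ENNReal.ofReal (_ * ?_)
        exact Real.rpow_le_rpow_of_nonpos hδ hδζ (by linarith)
    _ ≤ K * ENNReal.ofReal (a / (a - β) * (1 - r) ^ (a - β)) *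
          ENNReal.ofReal ((1 - r) ^ (b - a)) := by
        rw [lintegral_mul_const _ (by fun_prop)]
        gcongr
        exact setLIntegral_rpow_preimage_Ioc_le hf ha hβa hδ hK
    _ = _ := by
        rw [mul_assoc, ← ENNReal.ofReal_mul (by positivity), mul_assoc (a / _),
          ← Real.rpow_add hδ]
        ring_nf

lemma setLIntegral_one_sub_norm_rpow_preimage_Ioi_le (hb : 0 < b) (hba : b ≤ a) (hbβ : b < β)
    (hr1 : r < 1) (hK : ∀ t > 0, μ {ζ : ℂ | t < 1 - ‖ζ‖} ≤ K * ENNReal.ofReal (t ^ (-β))) :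
    ∫⁻ ζ in (fun ζ : ℂ => 1 - ‖ζ‖) ⁻¹' Ioi (1 - r),
        ENNReal.ofReal ((1 - ‖ζ‖) ^ a * (1 - r * ‖ζ‖) ^ (b - a)) ∂μ ≤
      K * ENNReal.ofReal (β / (β - b) * (1 - r) ^ (b - β)) := by
  have hδ : 0 < 1 - r := sub_pos.2 hr1
  have hf : Measurable fun ζ : ℂ => 1 - ‖ζ‖ := by fun_prop
  refine le_trans (setLIntegral_mono' (hf measurableSet_Ioi) fun ζ hζ => ?_)
    (setLIntegral_rpow_preimage_Ioi_le hf hb hbβ hδ hK)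
  have h0 : 0 < 1 - ‖ζ‖ := hδ.trans hζ
  have hζr : 1 - ‖ζ‖ ≤ 1 - r * ‖ζ‖ := by nlinarith [norm_nonneg ζ]
  calc ENNReal.ofReal ((1 - ‖ζ‖) ^ a * (1 - r * ‖ζ‖) ^ (b - a))
      ≤ ENNReal.ofReal ((1 - ‖ζ‖) ^ a * (1 - ‖ζ‖) ^ (b - a)) := by
        gcongr ENNReal.ofReal (_ * ?_)
        exact Real.rpow_le_rpow_of_nonpos h0 hζr (by linarith)
    _ = ENNReal.ofReal ((1 - ‖ζ‖) ^ b) := by rw [← Real.rpow_add h0, add_sub_cancel]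

lemma lintegral_ball_one_sub_norm_rpow_le (hb : 0 < b) (hbβ : b < β) (hβa : β < a) (hr0 : 0 ≤ r)
    (hr1 : r < 1) (hK : ∀ t > 0, μ {ζ : ℂ | t < 1 - ‖ζ‖} ≤ K * ENNReal.ofReal (t ^ (-β))) :
    ∫⁻ ζ in ball 0 1, ENNReal.ofReal ((1 - ‖ζ‖) ^ a * (1 - r * ‖ζ‖) ^ (b - a)) ∂μ ≤
      K * ENNReal.ofReal ((a / (a - β) + β / (β - b)) * (1 - r) ^ (b - β)) := by
  have hδ : 0 < 1 - r := sub_pos.2 hr1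
  have hβ : 0 < β := hb.trans hbβ
  have ha : 0 < a := hβ.trans hβa
  have haβ : 0 < a - β := sub_pos.2 hβa
  have hβb : 0 < β - b := sub_pos.2 hbβ
  have hcover : ball (0 : ℂ) 1 =
      (fun ζ => 1 - ‖ζ‖) ⁻¹' Ioc 0 (1 - r) ∪ (fun ζ => 1 - ‖ζ‖) ⁻¹' Ioi (1 - r) := by
    rw [← preimage_union, Ioc_union_Ioi_eq_Ioi hδ.le]
    ext ζ
    simp
  rw [hcover, add_mul, ENNReal.ofReal_add (by positivity) (by positivity), mul_add]
  exact (lintegral_union_le _ _ _).trans (add_le_add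
    (setLIntegral_one_sub_norm_rpow_preimage_Ioc_le ha (hbβ.trans hβa).le hβa hr0 hr1 hK)
    (setLIntegral_one_sub_norm_rpow_preimage_Ioi_le hb (hbβ.trans hβa).le hbβ hr1 hK))

end MassIntegral

lemma measure_closedBall_lt_top_of_lintegral {μ : Measure ℂ} {n : ℕ} {r : ℝ} (hr : r < 1)
    (hfin : ∫⁻ ζ in ball (0 : ℂ) 1, ENNReal.ofReal ((1 - ‖ζ‖) ^ n) ∂μ ≠ ∞) :
    μ (closedBall 0 r) < ∞ := by
  have hr' : 0 < 1 - r := sub_pos.2 hr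
  have hlower : ENNReal.ofReal ((1 - r) ^ n) * μ (closedBall 0 r) ≤
      ∫⁻ ζ in ball (0 : ℂ) 1, ENNReal.ofReal ((1 - ‖ζ‖) ^ n) ∂μ := by
    rw [← setLIntegral_const]
    refine (setLIntegral_mono' measurableSet_closedBall fun ζ hζ => ?_).trans
      (lintegral_mono_set (closedBall_subset_ball hr))
    rw [mem_closedBall_zero_iff] at hζ
    gcongr
  exact ENNReal.lt_top_of_mul_ne_top_right (ne_top_of_le_ne_top hfin hlower)
    (ENNReal.ofReal_pos.2 (pow_pos hr' n)).ne'

lemma sFinite_restrict_of_lintegral_one_sub_norm_pow_ne_top {μ : Measure ℂ} {n : ℕ} {S : Set ℂ}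
    (hS : MeasurableSet S) (hS1 : S ⊆ ball 0 1)
    (hfin : ∫⁻ ζ in ball (0 : ℂ) 1, ENNReal.ofReal ((1 - ‖ζ‖) ^ n) ∂μ ≠ ∞) :
    SFinite (μ.restrict S) := by
  refine sFinite_of_lintegral_ne_top (by fun_prop) ?_
    (ne_top_of_le_ne_top hfin (lintegral_mono_set hS1))
  filter_upwards [ae_restrict_mem hS] with ζ hζ
  exact (ENNReal.ofReal_pos.2 (pow_pos (sub_pos.2 (mem_ball_zero_iff.1 (hS1 hζ))) n)).ne'

lemma exists_measure_lt_one_sub_norm_le {μ : Measure ℂ} {C β r₀ : ℝ} (hβ : 0 ≤ β)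
    (hr₀ : r₀ ∈ Ico (0 : ℝ) 1) (hfin : ∀ r < 1, μ (closedBall 0 r) < ∞)
    (hn : ∀ r ∈ Ioo r₀ 1, (μ (closedBall 0 r)).toReal ≤ C * (1 - r) ^ (-β)) :
    ∃ K : ℝ≥0, ∀ t > 0, μ {ζ : ℂ | t < 1 - ‖ζ‖} ≤ K * ENNReal.ofReal (t ^ (-β)) := by
  refine ⟨(μ (closedBall 0 r₀)).toNNReal + C.toNNReal, fun t ht => ?_⟩
  rw [ENNReal.coe_add, ENNReal.coe_toNNReal (hfin r₀ hr₀.2).ne, add_mul]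
  have hsub : {ζ : ℂ | t < 1 - ‖ζ‖} ⊆ closedBall 0 (1 - t) := fun ζ (hζ : t < 1 - ‖ζ‖) => by
    rw [mem_closedBall_zero_iff]; linarith
  rcases le_or_gt (1 - t) r₀ with htr | htr
  · rcases le_or_gt t 1 with ht1 | ht1
    · have hone : 1 ≤ ENNReal.ofReal (t ^ (-β)) :=
        ENNReal.one_le_ofReal.2 (Real.one_le_rpow_of_pos_of_le_one_of_nonpos ht ht1 (by linarith))
      calc μ {ζ : ℂ | t < 1 - ‖ζ‖} ≤ μ (closedBall 0 r₀) :=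
            measure_mono (hsub.trans (closedBall_subset_closedBall htr))
        _ ≤ μ (closedBall 0 r₀) * ENNReal.ofReal (t ^ (-β)) := le_mul_of_one_le_right' hone
        _ ≤ _ := le_self_add
    · have hempty : {ζ : ℂ | t < 1 - ‖ζ‖} = ∅ :=
        eq_empty_of_forall_notMem fun ζ (hζ : t < 1 - ‖ζ‖) => by linarith [norm_nonneg ζ]
      rw [hempty, measure_empty]
      exact zero_le
  · calc μ {ζ : ℂ | t < 1 - ‖ζ‖} ≤ μ (closedBall 0 (1 - t)) := measure_mono hsub
      _ = ENNReal.ofReal (μ (closedBall 0 (1 - t))).toReal :=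
          (ENNReal.ofReal_toReal (hfin _ (by linarith)).ne).symm
      _ ≤ ENNReal.ofReal (C * t ^ (-β)) := by
          gcongr
          simpa only [sub_sub_cancel] using hn (1 - t) ⟨htr, by linarith⟩
      _ = C.toNNReal * ENNReal.ofReal (t ^ (-β)) := ENNReal.ofReal_mul' (by positivity)
      _ ≤ _ := le_add_self

lemma abs_log_le_rpow_neg_div {x ε : ℝ} (hx0 : 0 < x) (hx1 : x ≤ 1) (hε : 0 < ε) :
    |Real.log x| ≤ x ^ (-ε) / ε := by
  rw [abs_of_nonpos (Real.log_nonpos hx0.le hx1), ← Real.log_inv, Real.rpow_neg hx0.le,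
    ← Real.inv_rpow hx0.le]
  exact Real.log_le_rpow_div (by positivity) hε

section WeierstrassFactor

variable {w : ℂ}

lemma log_norm_weierE (s : ℕ) (hw : w ≠ 1) : Real.log ‖weierE w s‖ =
    Real.log ‖1 - w‖ + (∑ j ∈ Finset.range s, w ^ (j + 1) / ((j : ℂ) + 1)).re := by
  rw [weierE, norm_mul, norm_exp, Real.log_mul (norm_ne_zero_iff.2 (sub_ne_zero.2 hw.symm))
    (Real.exp_pos _).ne', Real.log_exp]

lemma logTaylor_succ_neg (s : ℕ) (w : ℂ) :
    logTaylor (s + 1) (-w) = -∑ j ∈ Finset.range s, w ^ (j + 1) / ((j : ℂ) + 1) := by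
  rw [logTaylor, Finset.sum_range_succ', ← Finset.sum_neg_distrib]
  simp only [Nat.cast_zero, div_zero, add_zero, Nat.cast_add, Nat.cast_one]
  refine Finset.sum_congr rfl fun j _ => ?_
  have hsign : (-1 : ℂ) ^ (j + 1) * (-1) ^ (j + 1) = 1 := by rw [← mul_pow]; simp
  rw [neg_pow w, pow_succ (-1 : ℂ) (j + 1), ← neg_div]
  linear_combination -(w ^ (j + 1) / ((j : ℂ) + 1)) * hsign

lemma abs_log_norm_weierE_le_of_norm_le_half (s : ℕ) (hw : ‖w‖ ≤ 1 / 2) :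
    |Real.log ‖weierE w s‖| ≤ 2 * ‖w‖ ^ (s + 1) := by
  have hw1 : ‖-w‖ < 1 := by rw [norm_neg]; linarith
  have hne : w ≠ 1 := by rintro rfl; norm_num at hw
  have hremainder : Real.log ‖weierE w s‖ = (log (1 + -w) - logTaylor (s + 1) (-w)).re := by
    rw [log_norm_weierE s hne, logTaylor_succ_neg, sub_neg_eq_add, add_re, log_re,
      ← sub_eq_add_neg]
  have hinv : (1 - ‖w‖)⁻¹ ≤ 2 := by
    rw [inv_le_comm₀ (by linarith) two_pos]; linarith
  calc |Real.log ‖weierE w s‖|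
      ≤ ‖-w‖ ^ (s + 1) * (1 - ‖-w‖)⁻¹ / (s + 1) :=
        hremainder ▸ (abs_re_le_norm _).trans (norm_log_sub_logTaylor_le s hw1)
    _ ≤ ‖w‖ ^ (s + 1) * 2 / 1 := by
        rw [norm_neg]
        gcongr
        exact le_add_of_nonneg_left s.cast_nonneg
    _ = 2 * ‖w‖ ^ (s + 1) := by ring

lemma abs_log_norm_weierE_sub_log_le (s : ℕ) {R : ℝ} (hw1 : w ≠ 1) (hwR : ‖w‖ ≤ R) :
    |Real.log ‖weierE w s‖ - Real.log ‖1 - w‖| ≤ ∑ j ∈ Finset.range s, R ^ (j + 1) := by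
  rw [log_norm_weierE s hw1, add_sub_cancel_left]
  refine (abs_re_le_norm _).trans (norm_sum_le_of_le _ fun j _ => ?_)
  have hj : 1 ≤ ‖(j : ℂ) + 1‖ := by
    rw [← Nat.cast_succ, norm_natCast]
    exact_mod_cast Nat.succ_pos j
  calc ‖w ^ (j + 1) / ((j : ℂ) + 1)‖ ≤ ‖w‖ ^ (j + 1) := by
        rw [norm_div, norm_pow]; exact div_le_self (by positivity) hj
    _ ≤ R ^ (j + 1) := by gcongr

lemma exists_abs_log_norm_weierE_le (s : ℕ) {R : ℝ} (hR : 0 ≤ R) : ∃ C ≥ 0, ∀ w : ℂ, ‖w‖ ≤ R →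
    |Real.log ‖weierE w s‖| ≤ C * (‖w‖ ^ (s + 1) * (1 + |Real.log ‖1 - w‖|)) := by
  set S : ℝ := ∑ j ∈ Finset.range s, R ^ (j + 1)
  have hS : 0 ≤ S := Finset.sum_nonneg fun j _ => by positivity
  refine ⟨2 + (1 + S) * 2 ^ (s + 1), by positivity, fun w hw => ?_⟩
  rw [add_mul]
  rcases le_or_gt ‖w‖ (1 / 2) with hsmall | hlarge
  · calc |Real.log ‖weierE w s‖| ≤ 2 * ‖w‖ ^ (s + 1) :=
          abs_log_norm_weierE_le_of_norm_le_half s hsmall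
      _ ≤ 2 * (‖w‖ ^ (s + 1) * (1 + |Real.log ‖1 - w‖|)) := by
          gcongr
          exact le_mul_of_one_le_right (by positivity) (le_add_of_nonneg_right (abs_nonneg _))
      _ ≤ _ := le_add_of_nonneg_right (by positivity)
  · rcases eq_or_ne w 1 with rfl | hne
    · rw [weierE, sub_self, zero_mul, norm_zero, Real.log_zero, abs_zero]
      positivity
    have hpow : 1 ≤ 2 ^ (s + 1) * ‖w‖ ^ (s + 1) := by
      rw [← mul_pow]; exact one_le_pow₀ (by linarith)
    calc |Real.log ‖weierE w s‖| ≤ S + |Real.log ‖1 - w‖| := by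
          have := abs_log_norm_weierE_sub_log_le s hne hw
          linarith [abs_sub_abs_le_abs_sub (Real.log ‖weierE w s‖) (Real.log ‖1 - w‖)]
      _ ≤ (1 + S) * (1 + |Real.log ‖1 - w‖|) := by
          nlinarith [mul_nonneg hS (abs_nonneg (Real.log ‖1 - w‖))]
      _ ≤ (1 + S) * (1 + |Real.log ‖1 - w‖|) * (2 ^ (s + 1) * ‖w‖ ^ (s + 1)) :=
          le_mul_of_one_le_right (by positivity) hpow
      _ = (1 + S) * 2 ^ (s + 1) * (‖w‖ ^ (s + 1) * (1 + |Real.log ‖1 - w‖|)) := by ring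
      _ ≤ _ := le_add_of_nonneg_left (by positivity)

end WeierstrassFactor

/-- The pseudo-hyperbolic distance on the unit disc, the factor of `|1 - A(z, ζ)|` that vanishes on
the diagonal. -/
noncomputable def pseudoHyperbolicDist (z ζ : ℂ) : ℝ :=
  ‖z - ζ‖ / ‖1 - z * conj ζ‖

/-- The kernel `log |E(A(z, ζ), s)|` of canonical integrals of genus `s`. Where it is `-∞`,
the convention `Real.log 0 = 0` gives it the value `0`. -/
noncomputable def canonicalKernel (s : ℕ) (z ζ : ℂ) : ℝ :=
  Real.log ‖weierE (Acayley z ζ) s‖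

lemma measurable_canonicalKernel (s : ℕ) :
    Measurable (Function.uncurry (canonicalKernel s)) := by
  unfold canonicalKernel weierE Acayley
  fun_prop

section Geometry

variable {z ζ : ℂ}

lemma pseudoHyperbolicDist_nonneg (z ζ : ℂ) : 0 ≤ pseudoHyperbolicDist z ζ := by
  unfold pseudoHyperbolicDist
  positivity

lemma one_sub_norm_mul_norm_le (z ζ : ℂ) : 1 - ‖z‖ * ‖ζ‖ ≤ ‖1 - z * conj ζ‖ := by
  simpa only [norm_one, norm_mul, RCLike.norm_conj] using norm_sub_norm_le 1 (z * conj ζ)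

lemma norm_one_sub_mul_conj_pos (hz : ‖z‖ < 1) (hζ : ‖ζ‖ < 1) : 0 < ‖1 - z * conj ζ‖ :=
  (sub_pos.2 (mul_lt_one_of_nonneg_of_lt_one_left (norm_nonneg z) hz hζ.le)).trans_le
    (one_sub_norm_mul_norm_le z ζ)

lemma norm_Acayley_le (z : ℂ) (hζ : ‖ζ‖ ≤ 1) :
    ‖Acayley z ζ‖ ≤ 2 * (1 - ‖ζ‖) / ‖1 - z * conj ζ‖ := by
  have hnum : ((1 : ℂ) - (‖ζ‖ : ℂ) ^ 2) = ((1 - ‖ζ‖ ^ 2 : ℝ) : ℂ) := by push_cast; rfl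
  rw [Acayley, norm_div, hnum, norm_real, Real.norm_eq_abs,
    abs_of_nonneg (by nlinarith [norm_nonneg ζ])]
  gcongr
  nlinarith [norm_nonneg ζ]

lemma norm_Acayley_le_two (hz : ‖z‖ < 1) (hζ : ‖ζ‖ < 1) : ‖Acayley z ζ‖ ≤ 2 := by
  refine (norm_Acayley_le z hζ.le).trans ((div_le_iff₀ (norm_one_sub_mul_conj_pos hz hζ)).2 ?_)
  have hle : 1 - ‖ζ‖ ≤ 1 - ‖z‖ * ‖ζ‖ := by nlinarith [norm_nonneg ζ]
  linarith [one_sub_norm_mul_norm_le z ζ]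

lemma norm_one_sub_Acayley (hz : ‖z‖ < 1) (hζ : ‖ζ‖ < 1) :
    ‖1 - Acayley z ζ‖ = ‖ζ‖ * pseudoHyperbolicDist z ζ := by
  have hD : 1 - z * conj ζ ≠ 0 := norm_pos_iff.1 (norm_one_sub_mul_conj_pos hz hζ)
  have hfactor : 1 - Acayley z ζ = conj ζ * (ζ - z) / (1 - z * conj ζ) := by
    rw [Acayley, eq_div_iff hD, sub_mul, div_mul_cancel₀ _ hD]
    linear_combination -(conj_mul' ζ)
  rw [hfactor, norm_div, norm_mul, RCLike.norm_conj, norm_sub_rev, pseudoHyperbolicDist,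
    mul_div_assoc]

lemma pseudoHyperbolicDist_le_one (hz : ‖z‖ < 1) (hζ : ‖ζ‖ < 1) :
    pseudoHyperbolicDist z ζ ≤ 1 := by
  have hidentity : ‖1 - z * conj ζ‖ ^ 2 - ‖z - ζ‖ ^ 2 = (1 - ‖z‖ ^ 2) * (1 - ‖ζ‖ ^ 2) := by
    simp only [← normSq_eq_norm_sq, normSq_apply, sub_re, sub_im, mul_re, mul_im, conj_re,
      conj_im, one_re, one_im]
    ring
  have hz2 : 0 ≤ 1 - ‖z‖ ^ 2 := by nlinarith [norm_nonneg z]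
  have hζ2 : 0 ≤ 1 - ‖ζ‖ ^ 2 := by nlinarith [norm_nonneg ζ]
  rw [pseudoHyperbolicDist, div_le_one (norm_one_sub_mul_conj_pos hz hζ)]
  refine (sq_le_sq₀ (norm_nonneg _) (norm_nonneg _)).1 ?_
  linarith [mul_nonneg hz2 hζ2]

lemma one_div_eight_le_pseudoHyperbolicDist (hz : 3 / 4 ≤ ‖z‖) (hz1 : ‖z‖ < 1)
    (hζ : ‖ζ‖ < 1 / 2) : 1 / 8 ≤ pseudoHyperbolicDist z ζ := by
  have hD : ‖1 - z * conj ζ‖ ≤ 1 + ‖z‖ * ‖ζ‖ := by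
    simpa only [norm_one, norm_mul, RCLike.norm_conj] using norm_sub_le 1 (z * conj ζ)
  rw [pseudoHyperbolicDist, le_div_iff₀ (norm_one_sub_mul_conj_pos hz1 (by linarith))]
  nlinarith [norm_sub_norm_le z ζ]

lemma Acayley_ne_one (hz : ‖z‖ < 1) (hζ : ‖ζ‖ < 1) (hζ0 : 0 < ‖ζ‖)
    (hφ : 0 < pseudoHyperbolicDist z ζ) : Acayley z ζ ≠ 1 := by
  have hpos : 0 < ‖1 - Acayley z ζ‖ := by rw [norm_one_sub_Acayley hz hζ]; positivity
  exact (sub_ne_zero.1 (norm_pos_iff.1 hpos)).symm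

lemma canonicalKernel_eq_zero (s : ℕ) (hz : ‖z‖ < 1) (hζ : ‖ζ‖ < 1)
    (h : ‖ζ‖ * pseudoHyperbolicDist z ζ = 0) : canonicalKernel s z ζ = 0 := by
  rw [← norm_one_sub_Acayley hz hζ, norm_eq_zero] at h
  rw [canonicalKernel, weierE, h, zero_mul, norm_zero, Real.log_zero]

end Geometry

lemma exists_abs_canonicalKernel_le (s : ℕ) {ε : ℝ} (hε : 0 < ε) :
    ∃ C : ℝ≥0, ∀ z ζ : ℂ, ‖z‖ < 1 → 1 / 2 ≤ ‖ζ‖ → ‖ζ‖ < 1 →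
      |canonicalKernel s z ζ| ≤
        C * (‖Acayley z ζ‖ ^ (s + 1) * pseudoHyperbolicDist z ζ ^ (-ε)) := by
  obtain ⟨C, hC, hE⟩ := exists_abs_log_norm_weierE_le s zero_le_two
  refine ⟨⟨C * (3 + 1 / ε), by positivity⟩, fun z ζ hz hζ' hζ => ?_⟩
  have hφ1 := pseudoHyperbolicDist_le_one hz hζ
  rcases (pseudoHyperbolicDist_nonneg z ζ).eq_or_lt with hφ0 | hφ0
  · rw [canonicalKernel_eq_zero s hz hζ (by rw [← hφ0, mul_zero]), abs_zero]
    exact mul_nonneg (NNReal.coe_nonneg _) (by rw [← hφ0]; positivity)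
  set φ := pseudoHyperbolicDist z ζ
  have hζ0 : 0 < ‖ζ‖ := by linarith
  have hφε : 1 ≤ φ ^ (-ε) := Real.one_le_rpow_of_pos_of_le_one_of_nonpos hφ0 hφ1 (by linarith)
  have hlogζ : |Real.log ‖ζ‖| ≤ 2 := by
    refine (abs_log_le_rpow_neg_div hζ0 hζ.le one_pos).trans ?_
    rw [div_one, Real.rpow_neg_one, inv_le_comm₀ hζ0 two_pos]
    linarith
  have hlog : 1 + |Real.log ‖1 - Acayley z ζ‖| ≤ (3 + 1 / ε) * φ ^ (-ε) := by
    have hsplit := abs_add_le (Real.log ‖ζ‖) (Real.log φ)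
    rw [norm_one_sub_Acayley hz hζ, Real.log_mul hζ0.ne' hφ0.ne', add_mul, one_div_mul_eq_div]
    linarith [abs_log_le_rpow_neg_div hφ0 hφ1 hε]
  calc |canonicalKernel s z ζ|
      ≤ C * (‖Acayley z ζ‖ ^ (s + 1) * (1 + |Real.log ‖1 - Acayley z ζ‖|)) :=
        hE _ (norm_Acayley_le_two hz hζ)
    _ ≤ C * (‖Acayley z ζ‖ ^ (s + 1) * ((3 + 1 / ε) * φ ^ (-ε))) := by gcongr
    _ = C * (3 + 1 / ε) * (‖Acayley z ζ‖ ^ (s + 1) * φ ^ (-ε)) := by ring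

lemma exists_abs_canonicalKernel_sub_log_le (s : ℕ) : ∃ C : ℝ, ∀ z ζ : ℂ, 3 / 4 ≤ ‖z‖ →
    ‖z‖ < 1 → ‖ζ‖ < 1 / 2 → |canonicalKernel s z ζ - Real.log ‖ζ‖| ≤ C := by
  set S : ℝ := ∑ j ∈ Finset.range s, 2 ^ (j + 1)
  refine ⟨S + 8, fun z ζ hz hz1 hζ => ?_⟩
  have hS : 0 ≤ S := Finset.sum_nonneg fun j _ => by positivity
  have hζ1 : ‖ζ‖ < 1 := by linarith
  rcases (norm_nonneg ζ).eq_or_lt with hζ0 | hζ0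
  · rw [canonicalKernel_eq_zero s hz1 hζ1 (by rw [← hζ0, zero_mul]), ← hζ0, Real.log_zero,
      sub_zero, abs_zero]
    linarith
  have hφ := one_div_eight_le_pseudoHyperbolicDist hz hz1 hζ
  have hφ0 : 0 < pseudoHyperbolicDist z ζ := by linarith
  have hlogφ : |Real.log (pseudoHyperbolicDist z ζ)| ≤ 8 := by
    refine (abs_log_le_rpow_neg_div hφ0 (pseudoHyperbolicDist_le_one hz1 hζ1) one_pos).trans ?_
    rw [div_one, Real.rpow_neg_one, inv_le_comm₀ hφ0 (by norm_num)]
    linarith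
  have hE := abs_log_norm_weierE_sub_log_le s (Acayley_ne_one hz1 hζ1 hζ0 hφ0)
    (norm_Acayley_le_two hz1 hζ1)
  rw [norm_one_sub_Acayley hz1 hζ1, Real.log_mul hζ0.ne' hφ0.ne', ← sub_sub] at hE
  have htriangle := abs_add_le (canonicalKernel s z ζ - Real.log ‖ζ‖ -
    Real.log (pseudoHyperbolicDist z ζ)) (Real.log (pseudoHyperbolicDist z ζ))
  rw [sub_add_cancel] at htriangle
  exact htriangle.trans (add_le_add hE hlogφ)

lemma lintegral_comp_abs (f : ℝ → ℝ≥0∞) : ∫⁻ t, f |t| = 2 * ∫⁻ t in Ioi 0, f t := by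
  have hpos : ∫⁻ t in Ioi 0, f |t| = ∫⁻ t in Ioi 0, f t :=
    setLIntegral_congr_fun measurableSet_Ioi fun t (ht : 0 < t) => by rw [abs_of_pos ht]
  have hneg : ∫⁻ t in (Ioi 0)ᶜ, f |t| = ∫⁻ t in Ioi 0, f |t| := by
    have hmap := (Measure.measurePreserving_neg (volume : Measure ℝ)).setLIntegral_comp_emb
      (MeasurableEquiv.neg ℝ).measurableEmbedding (fun t => f |t|) (Iio 0)
    simp only [image_neg_eq_neg, neg_Iio, neg_zero, abs_neg] at hmap
    rw [compl_Ioi, setLIntegral_congr Iio_ae_eq_Iic.symm, hmap]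
  rw [← lintegral_add_compl _ measurableSet_Ioi, hneg, hpos, two_mul]

lemma lintegral_Ioi_add_rpow_mul_rpow_le {M τ η : ℝ} (hτ : τ < 1) (hM : 1 < M) (hη : 0 < η) :
    ∫⁻ t in Ioi 0, ENNReal.ofReal ((η + t) ^ (τ - M) * t ^ (-τ)) ≤
      ENNReal.ofReal ((1 / (1 - τ) + 1 / (M - 1)) * η ^ (1 - M)) := by
  have hτ1 : 0 < 1 - τ := sub_pos.2 hτ
  have hM1 : 0 < M - 1 := sub_pos.2 hM
  have hnear : ∫⁻ t in Ioc 0 η, ENNReal.ofReal ((η + t) ^ (τ - M) * t ^ (-τ)) ≤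
      ENNReal.ofReal (1 / (1 - τ) * η ^ (1 - M)) := by
    calc _ ≤ ∫⁻ t in Ioc 0 η, ENNReal.ofReal (η ^ (τ - M)) * ENNReal.ofReal (t ^ (-τ)) := by
          refine setLIntegral_mono' measurableSet_Ioc fun t ht => ?_
          rw [← ENNReal.ofReal_mul (by positivity)]
          gcongr ENNReal.ofReal (?_ * _)
          · exact Real.rpow_nonneg ht.1.le _
          · exact Real.rpow_le_rpow_of_nonpos hη (by linarith [ht.1]) (by linarith)
      _ = _ := by
          rw [lintegral_const_mul _ (by fun_prop), lintegral_Ioc_rpow (by linarith) hη.le,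
            ← ENNReal.ofReal_mul (by positivity), mul_div_assoc', ← Real.rpow_add hη]
          ring_nf
  have hfar : ∫⁻ t in Ioi η, ENNReal.ofReal ((η + t) ^ (τ - M) * t ^ (-τ)) ≤
      ENNReal.ofReal (1 / (M - 1) * η ^ (1 - M)) := by
    calc _ ≤ ∫⁻ t in Ioi η, ENNReal.ofReal (t ^ (-M)) := by
          refine setLIntegral_mono' measurableSet_Ioi fun t (ht : η < t) => ?_
          have ht0 : 0 < t := hη.trans ht
          rw [show -M = τ - M + -τ by ring, Real.rpow_add ht0]
          gcongr ENNReal.ofReal (?_ * _)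
          exact Real.rpow_le_rpow_of_nonpos ht0 (by linarith) (by linarith)
      _ = _ := by
          rw [lintegral_Ioi_rpow (by linarith) hη, show -M + 1 = -(M - 1) by ring,
            neg_div_neg_eq, neg_sub, one_div_mul_eq_div]
  rw [← Ioc_union_Ioi_eq_Ioi hη.le, add_mul,
    ENNReal.ofReal_add (by positivity) (by positivity)]
  exact (lintegral_union_le _ _ _).trans (add_le_add hnear hfar)

lemma setLIntegral_Ioc_le_lintegral_of_periodic {f g : ℝ → ℝ≥0∞} {T : ℝ} (hT : 0 < T)
    (hf : f.Periodic T) (φ : ℝ) (hfg : ∀ᵐ t, |t| ≤ T / 2 → f (φ + t) ≤ g t) :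
    ∫⁻ θ in Ioc 0 T, f θ ≤ ∫⁻ t, g t := by
  have hperiod : ∫⁻ θ in Ioc 0 T, f θ = ∫⁻ θ in Ioc (φ - T / 2) (φ - T / 2 + T), f θ := by
    have hinv (γ : AddSubgroup.zmultiples T) (θ : ℝ) : f (γ +ᵥ θ) = f θ :=
      hf.map_vadd_zmultiples γ θ
    simpa only [zero_add] using (isAddFundamentalDomain_Ioc hT 0).setLIntegral_eq
      (isAddFundamentalDomain_Ioc hT (φ - T / 2)) f hinv
  have hshift : ∀ᵐ θ, |θ - φ| ≤ T / 2 → f θ ≤ g (θ - φ) := by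
    simpa only [add_sub_cancel] using
      (measurePreserving_sub_right volume φ).quasiMeasurePreserving.ae hfg
  calc ∫⁻ θ in Ioc 0 T, f θ = ∫⁻ θ in Ioc (φ - T / 2) (φ - T / 2 + T), f θ := hperiod
    _ ≤ ∫⁻ θ in Ioc (φ - T / 2) (φ - T / 2 + T), g (θ - φ) := by
        refine lintegral_mono_ae ((ae_restrict_iff' measurableSet_Ioc).2 (hshift.mono ?_))
        exact fun θ hθ hmem => hθ (abs_le.2 ⟨by linarith [hmem.1], by linarith [hmem.2]⟩)
    _ ≤ ∫⁻ θ, g (θ - φ) := setLIntegral_le_lintegral _ _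
    _ = ∫⁻ t, g t := lintegral_sub_right_eq_self g φ

section Angular

variable {r t : ℝ} {ζ : ℂ}

lemma norm_sub_mul_exp_sq (a b t : ℝ) :
    ‖(a : ℂ) - b * exp (t * I)‖ ^ 2 = (a - b) ^ 2 + 4 * (a * b) * Real.sin (t / 2) ^ 2 := by
  have hcos : Real.cos t = 1 - 2 * Real.sin (t / 2) ^ 2 := by
    have h := Real.cos_two_mul (t / 2)
    rw [mul_div_cancel₀ t two_ne_zero, Real.cos_sq'] at h
    linear_combination h
  rw [← normSq_eq_norm_sq, normSq_apply]
  simp only [sub_re, sub_im, re_ofReal_mul, im_ofReal_mul, exp_ofReal_mul_I_re,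
    exp_ofReal_mul_I_im, ofReal_re, ofReal_im]
  linear_combination b ^ 2 * Real.sin_sq_add_cos_sq t - 2 * a * b * hcos

lemma abs_div_pi_le_norm_sub_mul_exp {a b : ℝ} (hab : 1 / 4 ≤ a * b) (ht : |t| ≤ π) :
    |t| / π ≤ ‖(a : ℂ) - b * exp (t * I)‖ := by
  have hhalf : |t / 2| ≤ π / 2 := by rw [abs_div, abs_two]; linarith
  have hsin : |t| / π ≤ |Real.sin (t / 2)| := by
    refine (Real.mul_abs_le_abs_sin hhalf).trans' (le_of_eq ?_)
    rw [abs_div, abs_two]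
    ring
  refine hsin.trans (abs_le_of_sq_le_sq ?_ (norm_nonneg _))
  rw [norm_sub_mul_exp_sq]
  nlinarith [sq_nonneg (a - b), sq_nonneg (Real.sin (t / 2))]

lemma circleMap_arg_add (r t : ℝ) (ζ : ℂ) :
    circleMap 0 r (ζ.arg + t) = exp (ζ.arg * I) * (r * exp (t * I)) := by
  rw [circleMap_zero, ofReal_add, add_mul, exp_add]
  ring

lemma norm_circleMap_sub (r t : ℝ) (ζ : ℂ) :
    ‖circleMap 0 r (ζ.arg + t) - ζ‖ = ‖(‖ζ‖ : ℂ) - r * exp (t * I)‖ := by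
  have hfactor : circleMap 0 r (ζ.arg + t) - ζ =
      exp (ζ.arg * I) * (r * exp (t * I) - ‖ζ‖) := by
    rw [circleMap_arg_add]
    linear_combination norm_mul_exp_arg_mul_I ζ
  rw [hfactor, norm_mul, norm_exp_ofReal_mul_I, one_mul, norm_sub_rev]

lemma one_sub_circleMap_mul_conj (r t : ℝ) (ζ : ℂ) :
    1 - circleMap 0 r (ζ.arg + t) * conj ζ = (1 : ℝ) - (r * ‖ζ‖ : ℝ) * exp (t * I) := by
  have hconj : exp (ζ.arg * I) * conj ζ = ‖ζ‖ := by
    conv_lhs => rw [← norm_mul_exp_arg_mul_I ζ]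
    rw [map_mul, conj_ofReal, ← exp_conj, map_mul, conj_ofReal, conj_I, mul_left_comm, ← exp_add]
    simp
  rw [circleMap_arg_add]
  push_cast
  linear_combination -(r * exp (t * I)) * hconj

lemma abs_div_two_pi_le_norm_circleMap_sub (hrζ : 1 / 4 ≤ r * ‖ζ‖) (ht : |t| ≤ π) :
    |t| / (2 * π) ≤ ‖circleMap 0 r (ζ.arg + t) - ζ‖ := by
  rw [norm_circleMap_sub]
  refine (abs_div_pi_le_norm_sub_mul_exp (by rwa [mul_comm]) ht).trans' ?_
  gcongr
  linarith [Real.pi_pos]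

lemma add_abs_div_two_pi_le_norm_one_sub (hr0 : 0 ≤ r) (hr1 : r < 1) (hζ : ‖ζ‖ < 1)
    (hrζ : 1 / 4 ≤ r * ‖ζ‖) (ht : |t| ≤ π) :
    (1 - r * ‖ζ‖ + |t|) / (2 * π) ≤ ‖1 - circleMap 0 r (ζ.arg + t) * conj ζ‖ := by
  have hη : 0 < 1 - r * ‖ζ‖ := sub_pos.2 (mul_lt_one_of_nonneg_of_lt_one_left hr0 hr1 hζ.le)
  have hradial : (1 - r * ‖ζ‖) / π ≤ ‖1 - circleMap 0 r (ζ.arg + t) * conj ζ‖ := by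
    refine (div_le_self hη.le (by linarith [Real.pi_gt_three])).trans ?_
    simpa only [norm_circleMap_zero, abs_of_nonneg hr0] using
      one_sub_norm_mul_norm_le (circleMap 0 r (ζ.arg + t)) ζ
  have hangular : |t| / π ≤ ‖1 - circleMap 0 r (ζ.arg + t) * conj ζ‖ := by
    rw [one_sub_circleMap_mul_conj]
    exact abs_div_pi_le_norm_sub_mul_exp (by rwa [one_mul]) ht
  calc (1 - r * ‖ζ‖ + |t|) / (2 * π) = ((1 - r * ‖ζ‖) / π + |t| / π) / 2 := by ring
    _ ≤ ‖1 - circleMap 0 r (ζ.arg + t) * conj ζ‖ := by linarith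

lemma norm_Acayley_rpow_mul_pseudoHyperbolicDist_rpow_le {M τ : ℝ} (hτ : 0 ≤ τ) (hτM : τ ≤ M)
    (hr0 : 0 ≤ r) (hr1 : r < 1) (hζ : ‖ζ‖ < 1) (hrζ : 1 / 4 ≤ r * ‖ζ‖) (ht0 : t ≠ 0)
    (ht : |t| ≤ π) :
    ‖Acayley (circleMap 0 r (ζ.arg + t)) ζ‖ ^ M *
        pseudoHyperbolicDist (circleMap 0 r (ζ.arg + t)) ζ ^ (-τ) ≤
      (4 * π * (1 - ‖ζ‖)) ^ M * ((1 - r * ‖ζ‖ + |t|) ^ (τ - M) * |t| ^ (-τ)) := by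
  have hA := norm_Acayley_le (circleMap 0 r (ζ.arg + t)) hζ.le
  have hN := abs_div_two_pi_le_norm_circleMap_sub hrζ ht
  have hD := add_abs_div_two_pi_le_norm_one_sub hr0 hr1 hζ hrζ ht
  have hη : 0 < 1 - r * ‖ζ‖ := sub_pos.2 (mul_lt_one_of_nonneg_of_lt_one_left hr0 hr1 hζ.le)
  rw [pseudoHyperbolicDist]
  set D := ‖1 - circleMap 0 r (ζ.arg + t) * conj ζ‖
  set N := ‖circleMap 0 r (ζ.arg + t) - ζ‖
  set x := 1 - ‖ζ‖
  set η := 1 - r * ‖ζ‖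
  have hx : 0 < x := sub_pos.2 hζ
  have ht' : 0 < |t| := abs_pos.2 ht0
  have hN0 : 0 < N := hN.trans_lt' (by positivity)
  have hD0 : 0 < D := hD.trans_lt' (by positivity)
  have hpi : (2 * π) ^ (τ - M) * (2 * π) ^ (-τ) = ((2 * π) ^ M)⁻¹ := by
    rw [← Real.rpow_add (by positivity), ← Real.rpow_neg (by positivity)]
    ring_nf
  calc ‖Acayley (circleMap 0 r (ζ.arg + t)) ζ‖ ^ M * (N / D) ^ (-τ)
      ≤ (2 * x / D) ^ M * (N / D) ^ (-τ) := by gcongr; linarith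
    _ = (2 * x) ^ M * (D ^ (τ - M) * N ^ (-τ)) := by
        rw [Real.div_rpow (by positivity) hD0.le, Real.div_rpow hN0.le hD0.le,
          Real.rpow_neg hD0.le, Real.rpow_sub hD0]
        field_simp
    _ ≤ (2 * x) ^ M * (((η + |t|) / (2 * π)) ^ (τ - M) * (|t| / (2 * π)) ^ (-τ)) := by
        gcongr (2 * x) ^ M * (?_ * ?_)
        · exact Real.rpow_le_rpow_of_nonpos (by positivity) hD (by linarith)
        · exact Real.rpow_le_rpow_of_nonpos (by positivity) hN (by linarith)
    _ = (2 * x) ^ M * (2 * π) ^ M * ((η + |t|) ^ (τ - M) * |t| ^ (-τ)) := by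
        rw [Real.div_rpow (by positivity) (by positivity), Real.div_rpow ht'.le (by positivity),
          div_mul_div_comm, hpi, div_inv_eq_mul]
        ring
    _ = (4 * π * x) ^ M * ((η + |t|) ^ (τ - M) * |t| ^ (-τ)) := by
        rw [← Real.mul_rpow (by positivity) (by positivity)]
        ring_nf

end Angular

lemma exists_lintegral_norm_Acayley_rpow_mul_pseudoHyperbolicDist_rpow_le {M τ : ℝ} (hτ0 : 0 ≤ τ)
    (hτ1 : τ < 1) (hM : 1 < M) :
    ∃ C : ℝ≥0, ∀ (r : ℝ) (ζ : ℂ), 0 ≤ r → r < 1 → ‖ζ‖ < 1 → 1 / 4 ≤ r * ‖ζ‖ →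
      ∫⁻ θ in Ioc 0 (2 * π), ENNReal.ofReal (‖Acayley (circleMap 0 r θ) ζ‖ ^ M *
          pseudoHyperbolicDist (circleMap 0 r θ) ζ ^ (-τ)) ≤
        C * ENNReal.ofReal ((1 - ‖ζ‖) ^ M * (1 - r * ‖ζ‖) ^ (1 - M)) := by
  refine ⟨(2 * (4 * π) ^ M * (1 / (1 - τ) + 1 / (M - 1))).toNNReal, fun r ζ hr0 hr1 hζ hrζ => ?_⟩
  set η := 1 - r * ‖ζ‖
  have hx : 0 < 1 - ‖ζ‖ := sub_pos.2 hζ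
  have hη : 0 < η := sub_pos.2 (mul_lt_one_of_nonneg_of_lt_one_left hr0 hr1 hζ.le)
  set f : ℝ → ℝ≥0∞ := fun θ => ENNReal.ofReal (‖Acayley (circleMap 0 r θ) ζ‖ ^ M *
    pseudoHyperbolicDist (circleMap 0 r θ) ζ ^ (-τ))
  have hperiodic : f.Periodic (2 * π) := fun θ => by simp only [f, periodic_circleMap 0 r θ]
  have hpointwise : ∀ᵐ t : ℝ, |t| ≤ 2 * π / 2 → f (ζ.arg + t) ≤
      ENNReal.ofReal ((4 * π * (1 - ‖ζ‖)) ^ M * ((η + |t|) ^ (τ - M) * |t| ^ (-τ))) := by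
    filter_upwards [Measure.ae_ne volume 0] with t ht0 ht
    rw [mul_div_cancel_left₀ _ two_ne_zero] at ht
    exact ENNReal.ofReal_le_ofReal (norm_Acayley_rpow_mul_pseudoHyperbolicDist_rpow_le hτ0
      (hτ1.trans hM).le hr0 hr1 hζ hrζ ht0 ht)
  calc ∫⁻ θ in Ioc 0 (2 * π), f θ
      ≤ ∫⁻ t, ENNReal.ofReal ((4 * π * (1 - ‖ζ‖)) ^ M * ((η + |t|) ^ (τ - M) * |t| ^ (-τ))) :=
        setLIntegral_Ioc_le_lintegral_of_periodic Real.two_pi_pos hperiodic ζ.arg hpointwise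
    _ = ENNReal.ofReal ((4 * π * (1 - ‖ζ‖)) ^ M) *
          (2 * ∫⁻ t in Ioi 0, ENNReal.ofReal ((η + t) ^ (τ - M) * t ^ (-τ))) := by
        rw [← lintegral_comp_abs fun t => ENNReal.ofReal ((η + t) ^ (τ - M) * t ^ (-τ)),
          ← lintegral_const_mul _ (by fun_prop)]
        exact lintegral_congr fun t => ENNReal.ofReal_mul (by positivity)
    _ ≤ ENNReal.ofReal ((4 * π * (1 - ‖ζ‖)) ^ M) *
          (2 * ENNReal.ofReal ((1 / (1 - τ) + 1 / (M - 1)) * η ^ (1 - M))) := by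
        gcongr
        exact lintegral_Ioi_add_rpow_mul_rpow_le hτ1 hM hη
    _ = ENNReal.ofReal (2 * (4 * π) ^ M * (1 / (1 - τ) + 1 / (M - 1))) *
          ENNReal.ofReal ((1 - ‖ζ‖) ^ M * η ^ (1 - M)) := by
        rw [← ENNReal.ofReal_ofNat, ← ENNReal.ofReal_mul zero_le_two,
          ← ENNReal.ofReal_mul (by positivity), ← ENNReal.ofReal_mul' (by positivity),
          Real.mul_rpow (by positivity) hx.le]
        ring_nf

lemma exists_enorm_canonicalKernel_rpow_le (s : ℕ) {p τ : ℝ} (hp : 0 < p) (hτ : 0 < τ) :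
    ∃ C : ℝ≥0, ∀ z ζ : ℂ, ‖z‖ < 1 → 1 / 2 ≤ ‖ζ‖ → ‖ζ‖ < 1 →
      ‖canonicalKernel s z ζ‖ₑ ^ p ≤ C * ENNReal.ofReal (‖Acayley z ζ‖ ^ (((s : ℝ) + 1) * p) *
        pseudoHyperbolicDist z ζ ^ (-τ)) := by
  obtain ⟨C, hC⟩ := exists_abs_canonicalKernel_le s (div_pos hτ hp)
  refine ⟨C ^ p, fun z ζ hz hζ hζ1 => ?_⟩
  have hφ := pseudoHyperbolicDist_nonneg z ζ
  rw [← ENNReal.ofReal_coe_nnreal, NNReal.coe_rpow, ← ENNReal.ofReal_mul (by positivity),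
    Real.enorm_eq_ofReal_abs, ENNReal.ofReal_rpow_of_nonneg (abs_nonneg _) hp.le]
  refine ENNReal.ofReal_le_ofReal ((Real.rpow_le_rpow (abs_nonneg _)
    (hC z ζ hz hζ hζ1) hp.le).trans_eq ?_)
  rw [Real.mul_rpow C.coe_nonneg (by positivity), Real.mul_rpow (by positivity) (by positivity),
    ← Real.rpow_natCast_mul (norm_nonneg _), ← Real.rpow_mul hφ, Nat.cast_succ, neg_mul,
    div_mul_cancel₀ τ hp.ne']

lemma exists_lintegral_canonicalKernel_rpow_le (s : ℕ) {p : ℝ} (hp : 0 < p)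
    (hsp : 1 < ((s : ℝ) + 1) * p) :
    ∃ C : ℝ≥0, ∀ (r : ℝ) (ζ : ℂ), 1 / 2 ≤ r → r < 1 → 1 / 2 ≤ ‖ζ‖ → ‖ζ‖ < 1 →
      (∫⁻ θ in Ioc 0 (2 * π), ‖canonicalKernel s (circleMap 0 r θ) ζ‖ₑ ^ p) ^ (1 / p) ≤
        C * ENNReal.ofReal ((1 - ‖ζ‖) ^ ((s : ℝ) + 1) *
          (1 - r * ‖ζ‖) ^ (1 / p - ((s : ℝ) + 1))) := by
  obtain ⟨C, hC⟩ := exists_enorm_canonicalKernel_rpow_le s hp one_half_pos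
  obtain ⟨B, hB⟩ := exists_lintegral_norm_Acayley_rpow_mul_pseudoHyperbolicDist_rpow_le
    one_half_pos.le one_half_lt_one hsp
  refine ⟨(C * B) ^ (1 / p), fun r ζ hr hr1 hζ hζ1 => ?_⟩
  have hx : 0 < 1 - ‖ζ‖ := sub_pos.2 hζ1
  have hη : 0 < 1 - r * ‖ζ‖ := by nlinarith
  have hpow : ∫⁻ θ in Ioc 0 (2 * π), ‖canonicalKernel s (circleMap 0 r θ) ζ‖ₑ ^ p ≤
      (C * B : ℝ≥0) * ENNReal.ofReal ((1 - ‖ζ‖) ^ (((s : ℝ) + 1) * p) *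
        (1 - r * ‖ζ‖) ^ (1 - ((s : ℝ) + 1) * p)) := by
    refine (lintegral_mono fun θ => hC _ ζ ?_ hζ hζ1).trans ?_
    · rwa [norm_circleMap_zero, abs_of_nonneg (by linarith)]
    rw [lintegral_const_mul' _ _ ENNReal.coe_ne_top, ENNReal.coe_mul, mul_assoc]
    gcongr
    exact hB r ζ (by linarith) hr1 hζ1 (by nlinarith)
  refine (ENNReal.rpow_le_rpow hpow (by positivity)).trans_eq ?_
  rw [ENNReal.mul_rpow_of_nonneg _ _ (by positivity), ENNReal.coe_rpow_of_nonneg _ (by positivity),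
    ENNReal.ofReal_rpow_of_nonneg (by positivity) (by positivity),
    Real.mul_rpow (by positivity) (by positivity), ← Real.rpow_mul hx.le, ← Real.rpow_mul hη.le,
    mul_assoc ((s : ℝ) + 1), mul_one_div_cancel hp.ne', mul_one, sub_mul, one_mul,
    mul_assoc ((s : ℝ) + 1), mul_one_div_cancel hp.ne', mul_one]

lemma ofReal_mpMean_le {p : ℝ} (hp : 0 < p) (r : ℝ) (u : ℂ → ℝ) : ENNReal.ofReal (mpMean p r u) ≤
    (∫⁻ θ in Ioc 0 (2 * π), ‖u (circleMap 0 r θ)‖ₑ ^ p) ^ (1 / p) := by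
  have hnorm : 1 / (2 * π) ≤ 1 := (div_le_one Real.two_pi_pos).2 (by linarith [Real.pi_gt_three])
  simp only [mpMean, ← circleMap_zero]
  rw [intervalIntegral.integral_of_le Real.two_pi_pos.le]
  have hnonneg : 0 ≤ ∫ θ in Ioc 0 (2 * π), |u (circleMap 0 r θ)| ^ p :=
    integral_nonneg fun θ => by positivity
  rw [← ENNReal.ofReal_rpow_of_nonneg (by positivity) (by positivity)]
  gcongr
  calc ENNReal.ofReal (1 / (2 * π) * ∫ θ in Ioc 0 (2 * π), |u (circleMap 0 r θ)| ^ p)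
      ≤ ENNReal.ofReal (∫ θ in Ioc 0 (2 * π), |u (circleMap 0 r θ)| ^ p) :=
        ENNReal.ofReal_le_ofReal (mul_le_of_le_one_left hnonneg hnorm)
    _ ≤ ∫⁻ θ in Ioc 0 (2 * π), ‖|u (circleMap 0 r θ)| ^ p‖ₑ := by
        rw [← Real.enorm_of_nonneg hnonneg]
        exact enorm_integral_le_lintegral_enorm _
    _ = ∫⁻ θ in Ioc 0 (2 * π), ‖u (circleMap 0 r θ)‖ₑ ^ p :=
        lintegral_congr fun θ => by
          rw [Real.enorm_rpow_of_nonneg (abs_nonneg _) hp.le, Real.enorm_abs]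

section CanonicalIntegral

/-- The canonical integral `∫_𝔻 log |E(A(z, ζ), s)| dμ(ζ)` of genus `s`, so far as the kernel is
integrable; elsewhere the Bochner integral makes it `0`. -/
noncomputable def canonicalIntegral (s : ℕ) (μ : Measure ℂ) (z : ℂ) : ℝ :=
  ∫ ζ in ball 0 1, canonicalKernel s z ζ ∂μ

variable {μ : Measure ℂ} {α p : ℝ}

lemma exists_enorm_canonicalIntegral_le (s : ℕ) (hμ : μ (ball 0 (1 / 2)) ≠ ∞) :
    ∃ L : ℝ≥0, ∀ z : ℂ, 3 / 4 ≤ ‖z‖ → ‖z‖ < 1 → ‖canonicalIntegral s μ z‖ₑ ≤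
      L + ∫⁻ ζ in ball 0 1 \ ball 0 (1 / 2), ‖canonicalKernel s z ζ‖ₑ ∂μ := by
  obtain ⟨C, hC⟩ := exists_abs_canonicalKernel_sub_log_le s
  obtain ⟨L, hL⟩ := exists_enorm_setIntegral_le (g := fun ζ : ℂ => Real.log ‖ζ‖) C
    measurableSet_ball (ball_subset_ball one_half_lt_one.le) hμ
    (by fun_prop : Measurable _).aestronglyMeasurable
  refine ⟨L, fun z hz hz1 => hL _ ?_ fun ζ hζ => hC z ζ hz hz1 (mem_ball_zero_iff.1 hζ)⟩
  exact ((measurable_canonicalKernel s).comp measurable_prodMk_left).aestronglyMeasurable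

lemma measurable_enorm_canonicalKernel_circleMap (s : ℕ) (r : ℝ) :
    Measurable (Function.uncurry fun (θ : ℝ) (ζ : ℂ) =>
      ‖canonicalKernel s (circleMap 0 r θ) ζ‖ₑ) :=
  ((measurable_canonicalKernel s).comp (((continuous_circleMap 0 r).measurable.comp
    measurable_fst).prodMk measurable_snd)).enorm

lemma exists_lintegral_rpow_setLIntegral_canonicalKernel_le
    [SFinite (μ.restrict (ball 0 1 \ ball 0 (1 / 2)))] (s : ℕ) (hp : 1 ≤ p) (hα : 0 < α)
    (hαp : α + 1 / p < (s : ℝ) + 1) {K : ℝ≥0}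
    (hK : ∀ t > 0, μ {ζ : ℂ | t < 1 - ‖ζ‖} ≤ K * ENNReal.ofReal (t ^ (-(α + 1 / p)))) :
    ∃ C : ℝ≥0, ∀ r : ℝ, 1 / 2 ≤ r → r < 1 →
      (∫⁻ θ in Ioc 0 (2 * π), (∫⁻ ζ in ball 0 1 \ ball 0 (1 / 2),
        ‖canonicalKernel s (circleMap 0 r θ) ζ‖ₑ ∂μ) ^ p) ^ (1 / p) ≤
          C * ENNReal.ofReal ((1 - r) ^ (-α)) := by
  have hp0 : 0 < p := by linarith
  have hsp : 1 < ((s : ℝ) + 1) * p := (div_lt_iff₀ hp0).1 (by linarith)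
  obtain ⟨B, hB⟩ := exists_lintegral_canonicalKernel_rpow_le s hp0 hsp
  set D : ℝ := ((s : ℝ) + 1) / ((s : ℝ) + 1 - (α + 1 / p)) + (α + 1 / p) / (α + 1 / p - 1 / p)
  refine ⟨B * (K * D.toNNReal), fun r hr hr1 => ?_⟩
  have hmeas : MeasurableSet (ball (0 : ℂ) 1 \ ball 0 (1 / 2)) :=
    measurableSet_ball.diff measurableSet_ball
  set g : ℂ → ℝ≥0∞ := fun ζ => ENNReal.ofReal ((1 - ‖ζ‖) ^ ((s : ℝ) + 1) *
    (1 - r * ‖ζ‖) ^ (1 / p - ((s : ℝ) + 1)))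
  calc _ ≤ ∫⁻ ζ in ball 0 1 \ ball 0 (1 / 2),
        (∫⁻ θ in Ioc 0 (2 * π), ‖canonicalKernel s (circleMap 0 r θ) ζ‖ₑ ^ p) ^ (1 / p) ∂μ :=
        lintegral_rpow_lintegral_le hp (measurable_enorm_canonicalKernel_circleMap s r)
    _ ≤ ∫⁻ ζ in ball 0 1 \ ball 0 (1 / 2), B * g ζ ∂μ := by
        refine setLIntegral_mono' hmeas fun ζ hζ => hB r ζ hr hr1 ?_ ?_
        · simpa only [mem_ball_zero_iff, not_lt] using hζ.2
        · exact mem_ball_zero_iff.1 hζ.1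
    _ ≤ B * ∫⁻ ζ in ball 0 1, g ζ ∂μ := by
        rw [lintegral_const_mul' _ _ ENNReal.coe_ne_top]
        gcongr
        exact sdiff_subset
    _ ≤ B * (K * ENNReal.ofReal (D * (1 - r) ^ (1 / p - (α + 1 / p)))) := by
        gcongr
        exact lintegral_ball_one_sub_norm_rpow_le (by positivity) (by linarith) hαp
          (by linarith) hr1 hK
    _ = (B * (K * D.toNNReal) : ℝ≥0) * ENNReal.ofReal ((1 - r) ^ (-α)) := by
        rw [show 1 / p - (α + 1 / p) = -α by ring,
          ENNReal.ofReal_mul' (Real.rpow_nonneg (sub_nonneg.2 hr1.le) _)]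
        push_cast
        simp only [ENNReal.ofReal, mul_assoc]

theorem exists_lintegral_enorm_canonicalIntegral_rpow_le
    [SFinite (μ.restrict (ball 0 1 \ ball 0 (1 / 2)))] (s : ℕ) (hp : 1 ≤ p) (hα : 0 < α)
    (hαp : α + 1 / p < (s : ℝ) + 1) (hμ : μ (ball 0 (1 / 2)) ≠ ∞) {K : ℝ≥0}
    (hK : ∀ t > 0, μ {ζ : ℂ | t < 1 - ‖ζ‖} ≤ K * ENNReal.ofReal (t ^ (-(α + 1 / p)))) :
    ∃ C : ℝ≥0, ∀ r : ℝ, 3 / 4 ≤ r → r < 1 →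
      (∫⁻ θ in Ioc 0 (2 * π), ‖canonicalIntegral s μ (circleMap 0 r θ)‖ₑ ^ p) ^ (1 / p) ≤
        C * ENNReal.ofReal ((1 - r) ^ (-α)) := by
  have hp0 : 0 < p := by linarith
  obtain ⟨L, hL⟩ := exists_enorm_canonicalIntegral_le s hμ
  obtain ⟨C, hC⟩ := exists_lintegral_rpow_setLIntegral_canonicalKernel_le s hp hα hαp hK
  refine ⟨L * (2 * π).toNNReal ^ (1 / p) + C, fun r hr hr1 => ?_⟩
  have hnorm (θ : ℝ) : ‖circleMap 0 r θ‖ = r := by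
    rw [norm_circleMap_zero, abs_of_nonneg (by linarith)]
  have hone : 1 ≤ ENNReal.ofReal ((1 - r) ^ (-α)) := ENNReal.one_le_ofReal.2
    (Real.one_le_rpow_of_pos_of_le_one_of_nonpos (by linarith) (by linarith) (by linarith))
  have hconst : (∫⁻ _ in Ioc 0 (2 * π), (L : ℝ≥0∞) ^ p) ^ (1 / p) =
      (L * (2 * π).toNNReal ^ (1 / p) : ℝ≥0) := by
    rw [setLIntegral_const, Real.volume_Ioc, sub_zero,
      ENNReal.mul_rpow_of_nonneg _ _ (by positivity), ← ENNReal.rpow_mul,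
      mul_one_div_cancel hp0.ne', ENNReal.rpow_one, ENNReal.coe_mul,
      ENNReal.coe_rpow_of_nonneg _ (by positivity), ENNReal.ofReal]
  calc _ ≤ (∫⁻ θ in Ioc 0 (2 * π), (L + ∫⁻ ζ in ball 0 1 \ ball 0 (1 / 2),
          ‖canonicalKernel s (circleMap 0 r θ) ζ‖ₑ ∂μ) ^ p) ^ (1 / p) := by
        gcongr with θ
        exact hL _ (hr.trans_eq (hnorm θ).symm) (by rwa [hnorm])
    _ ≤ (∫⁻ _ in Ioc 0 (2 * π), (L : ℝ≥0∞) ^ p) ^ (1 / p) +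
          (∫⁻ θ in Ioc 0 (2 * π), (∫⁻ ζ in ball 0 1 \ ball 0 (1 / 2),
            ‖canonicalKernel s (circleMap 0 r θ) ζ‖ₑ ∂μ) ^ p) ^ (1 / p) :=
        ENNReal.lintegral_Lp_add_le aemeasurable_const
          (measurable_enorm_canonicalKernel_circleMap s r).lintegral_prod_right.aemeasurable hp
    _ ≤ (L * (2 * π).toNNReal ^ (1 / p) : ℝ≥0) * ENNReal.ofReal ((1 - r) ^ (-α)) +
          C * ENNReal.ofReal ((1 - r) ^ (-α)) := by
        rw [hconst]
        exact add_le_add (le_mul_of_one_le_right' hone) (hC r (by linarith) hr1)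
    _ = _ := by rw [ENNReal.coe_add, add_mul]

end CanonicalIntegral

theorem stmt5_general (s : ℕ) (u : ℂ → ℝ) (μ : Measure ℂ) (α p : ℝ)
    (hp : 1 ≤ p) (hα : 0 < α) (hαp : α + 1 / p < (s : ℝ) + 1)
    (hμfin : ∫⁻ ζ in ball (0 : ℂ) 1, ENNReal.ofReal ((1 - ‖ζ‖) ^ (s + 1)) ∂μ < ⊤)
    (hrep : ∀ z ∈ ball (0 : ℂ) 1,
      u z = ∫ ζ in ball (0 : ℂ) 1, Real.log ‖weierE (Acayley z ζ) s‖ ∂μ)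
    (hn : ∃ C₂ : ℝ, ∃ r₀ ∈ Ico (0 : ℝ) 1, ∀ r ∈ Ioo r₀ 1,
      (μ (closedBall (0 : ℂ) r)).toReal ≤ C₂ * (1 - r) ^ (-α - 1 / p)) :
    ∃ C₁ : ℝ, ∃ r₀ ∈ Ico (0 : ℝ) 1, ∀ r ∈ Ioo r₀ 1, mpMean p r u ≤ C₁ * (1 - r) ^ (-α) := by
  obtain ⟨C₂, r₀, hr₀, hn⟩ := hn
  have hp0 : 0 < p := by linarith
  have hfin (r : ℝ) (hr : r < 1) := measure_closedBall_lt_top_of_lintegral hr hμfin.ne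
  have hsfinite := sFinite_restrict_of_lintegral_one_sub_norm_pow_ne_top
    (measurableSet_ball.diff measurableSet_ball) (sdiff_subset (t := ball 0 (1 / 2))) hμfin.ne
  have hhalf : μ (ball 0 (1 / 2)) ≠ ∞ :=
    ((measure_mono ball_subset_closedBall).trans_lt (hfin _ one_half_lt_one)).ne
  obtain ⟨K, hK⟩ := exists_measure_lt_one_sub_norm_le (β := α + 1 / p) (by positivity) hr₀ hfin
    (by simpa only [neg_add'] using hn)
  obtain ⟨C, hC⟩ := exists_lintegral_enorm_canonicalIntegral_rpow_le s hp hα hαp hhalf hK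
  refine ⟨C, 3 / 4, by norm_num, fun r hr => ?_⟩
  have hr1 : 0 < 1 - r := sub_pos.2 hr.2
  have hu (θ : ℝ) : u (circleMap 0 r θ) = canonicalIntegral s μ (circleMap 0 r θ) :=
    hrep _ (by rw [mem_ball_zero_iff, norm_circleMap_zero, abs_of_pos] <;> linarith [hr.1, hr.2])
  rw [← ENNReal.ofReal_le_ofReal_iff (by positivity), ENNReal.ofReal_mul C.coe_nonneg,
    ENNReal.ofReal_coe_nnreal]
  refine (ofReal_mpMean_le hp0 r u).trans ?_
  simpa only [hu] using hC r hr.1.le hr.2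

/-- For the canonical integral `u(z) = ∫_𝔻 log|E(A(z,ζ),s)| dμ(ζ)` with
`α + 1/p < s + 1`, if `n(r,u) = μ(closedBall 0 r) = O((1-r)^{-α-1/p})` as `r ↑ 1`,
then `m_p(r,u) = O((1-r)^{-α})` as `r ↑ 1`. -/
theorem stmt5 (s : ℕ) (u : ℂ → ℝ) (μ : Measure ℂ) (α p : ℝ)
    (hp : 1 < p) (hα : 0 < α) (hαp : α + 1 / p < (s : ℝ) + 1)
    -- `μ` is a positive Borel measure on `𝔻` with `∫_𝔻 (1-|ζ|)^{s+1} dμ(ζ) < ∞`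
    (hμD : μ (Metric.ball (0 : ℂ) 1)ᶜ = 0)
    (hμfin : ∫⁻ ζ in Metric.ball (0 : ℂ) 1,
      ENNReal.ofReal ((1 - ‖ζ‖) ^ (s + 1)) ∂μ < ⊤)
    -- `u` is the canonical integral of `μ`
    (hrep : ∀ z ∈ Metric.ball (0 : ℂ) 1,
      u z = ∫ ζ in Metric.ball (0 : ℂ) 1,
        Real.log ‖weierE (Acayley z ζ) s‖ ∂μ)
    -- growth of the counting function
    (hn : ∃ C₂ : ℝ, ∃ r₀ ∈ Set.Ico (0 : ℝ) 1, ∀ r ∈ Set.Ioo r₀ 1,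
      (μ (Metric.closedBall (0 : ℂ) r)).toReal ≤ C₂ * (1 - r) ^ (-α - 1 / p)) :
    ∃ C₁ : ℝ, ∃ r₀ ∈ Set.Ico (0 : ℝ) 1, ∀ r ∈ Set.Ioo r₀ 1,
      mpMean p r u ≤ C₁ * (1 - r) ^ (-α) := by
  exact stmt5_general s u μ α p hp.le hα hαp hμfin hrep hn
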